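/- Let E be a real vector space, let v : Fin (n+1) → E be an affinely independent family of points, and let c = (n+1)⁻¹ • ∑_{j} v j be its centroid. For each i, let C_i = convexHull ℝ ({c} ∪ {v j : j ≠ i}). Then for every nonempty subset I ⊆ Fin (n+1): ⋂_{i∈I} C_i = convexHull ℝ ({c} ∪ {v j : j ∉ I}). In particular, when I = Fin (n+1), the intersection of all the cones is the single point {c}. -/

import Mathlib

/-! In barycentric coordinates the simplex consists of the finitely supported `x ≥ 0` of total
mass `1`, and `x` lies in the cone with apex `p` over the face spanned by `s` iff some `a ≥ 0` has
`a • p ≤ x`, with equality at the vertices outside `s`. Enlarging `a` preserves this as long as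
`a • p ≤ x`, so a single `a`, the largest one, decides membership of `x` in all the cones at once:
`x` lies in the cone over `s` iff `x - a • p` is supported in `s`. Hence taking cones commutes with
intersecting faces. -/

open Finsupp Set

section Coordinates

variable {𝕜 ι κ : Type*} [Field 𝕜] [LinearOrder 𝕜] {p x : ι →₀ 𝕜} {s : Set ι} {a : 𝕜}

/-- The standard simplex with vertex set `ι`, in barycentric coordinates. Coordinates are finitely
supported, so that `ι` may be infinite. -/
def finsuppSimplex (𝕜 ι : Type*) [Field 𝕜] [LinearOrder 𝕜] : Set (ι →₀ 𝕜) :=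
  {x | 0 ≤ x ∧ x.degree = 1}

lemma finsupp_degree_smul {R : Type*} [Semiring R] (r : R) (y : ι →₀ R) :
    (r • y).degree = r * y.degree := by
  rw [degree_eq_weight_one]
  exact map_smul (linearCombination R fun _ ↦ 1) r y

lemma convex_setOf_degree_eq_one : Convex 𝕜 {x : ι →₀ 𝕜 | x.degree = 1} := by
  intro x hx y hy t u _ _ htu
  rw [mem_ofPred_eq] at hx hy ⊢
  rw [map_add, finsupp_degree_smul, finsupp_degree_smul, hx, hy, mul_one, mul_one, htu]

variable [IsStrictOrderedRing 𝕜]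

lemma convex_finsuppSimplex : Convex 𝕜 (finsuppSimplex 𝕜 ι) :=
  (convex_Ici 0).inter convex_setOf_degree_eq_one

lemma single_one_mem_finsuppSimplex (i : ι) : single i 1 ∈ finsuppSimplex 𝕜 ι :=
  ⟨single_nonneg.2 zero_le_one, degree_single i 1⟩

lemma pos_of_mem_finsuppSimplex (hp : p ∈ finsuppSimplex 𝕜 ι) : 0 < p := by
  refine hp.1.lt_of_ne ?_
  rintro rfl
  exact zero_ne_one ((map_zero _).symm.trans hp.2)

lemma convexHull_insert_single_subset_finsuppSimplex (hp : p ∈ finsuppSimplex 𝕜 ι) :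
    convexHull 𝕜 (insert p ((single · 1) '' s)) ⊆ finsuppSimplex 𝕜 ι := by
  refine convexHull_min (insert_subset hp ?_) convex_finsuppSimplex
  rintro _ ⟨i, -, rfl⟩
  exact single_one_mem_finsuppSimplex i

lemma convex_setOf_exists_smul_le (p : ι →₀ 𝕜) (s : Set ι) :
    Convex 𝕜 {x | ∃ a, 0 ≤ a ∧ a • p ≤ x ∧ ∀ j ∉ s, x j = a * p j} := by
  rintro x ⟨a, ha, hax, hxs⟩ y ⟨b, hb, hby, hys⟩ t u ht hu -
  refine ⟨t * a + u * b, by positivity, ?_, fun j hj ↦ ?_⟩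
  · calc (t * a + u * b) • p = t • a • p + u • b • p := by rw [add_smul, mul_smul, mul_smul]
      _ ≤ t • x + u • y := by gcongr
  · simp only [Finsupp.add_apply, Finsupp.smul_apply, smul_eq_mul, hxs j hj, hys j hj]
    ring

lemma smul_add_mem_convexHull_insert_single {y : ι →₀ 𝕜} (ha : 0 ≤ a) (hy : 0 ≤ y)
    (hys : ↑y.support ⊆ s) (hay : a + y.degree = 1) :
    a • p + y ∈ convexHull 𝕜 (insert p ((single · 1) '' s)) := by
  have combination_mem := (convex_convexHull 𝕜 (insert p ((single · 1) '' s))).sum_mem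
    (t := Finset.insertNone y.support) (w := fun o ↦ o.elim a y)
    (z := fun o ↦ o.elim p (single · 1))
    (by rintro (_ | j) _; exacts [ha, hy j])
    (by rwa [Finset.sum_insertNone])
    (by
      rintro (_ | j) hj
      · exact subset_convexHull 𝕜 _ (mem_insert _ _)
      · exact subset_convexHull 𝕜 _
          (mem_insert_of_mem _ (mem_image_of_mem _ (hys (Finset.some_mem_insertNone.1 hj)))))
  have sum_single_eq : ∑ j ∈ y.support, y j • single j (1 : 𝕜) = y := by
    simp only [smul_single_one]
    exact y.sum_single
  simpa only [Finset.sum_insertNone, Option.elim_none, Option.elim_some, sum_single_eq]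
    using combination_mem

lemma mem_convexHull_insert_single_iff (hp : p.degree = 1) :
    x ∈ convexHull 𝕜 (insert p ((single · 1) '' s)) ↔
      x.degree = 1 ∧ ∃ a, 0 ≤ a ∧ a • p ≤ x ∧ ∀ j ∉ s, x j = a * p j := by
  constructor
  · have convex_rhs := convex_setOf_degree_eq_one.inter (convex_setOf_exists_smul_le p s)
    suffices generators_subset : insert p ((single · 1) '' s) ⊆ _ from
      fun hx ↦ convexHull_min generators_subset convex_rhs hx
    rintro _ (rfl | ⟨i, hi, rfl⟩)
    · exact ⟨hp, 1, zero_le_one, (one_smul 𝕜 _).le, fun j _ ↦ (one_mul _).symm⟩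
    · refine ⟨degree_single i 1, 0, le_rfl, ?_, fun j hj ↦ ?_⟩
      · simp
      · rw [zero_mul, single_eq_of_ne (ne_of_mem_of_not_mem hi hj).symm]
  · rintro ⟨hx, a, ha, hax, hxs⟩
    rw [← add_sub_cancel (a • p) x]
    refine smul_add_mem_convexHull_insert_single ha (sub_nonneg.2 hax) (fun j hj ↦ ?_) ?_
    · by_contra hjs
      exact mem_support_iff.1 hj (sub_eq_zero.2 (hxs j hjs))
    · rw [map_sub, finsupp_degree_smul, hp, hx, mul_one, add_sub_cancel]

lemma exists_isGreatest_smul_le (hp : 0 < p) (hx : 0 ≤ x) :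
    ∃ a, IsGreatest {a : 𝕜 | a • p ≤ x} a := by
  have coord_pos {j : ι} (hj : j ∈ p.support) : 0 < p j :=
    (hp.le j).lt_of_ne (mem_support_iff.1 hj).symm
  obtain ⟨i, hi, hmin⟩ :=
    p.support.exists_min_image (fun j ↦ x j / p j) (support_nonempty_iff.2 hp.ne')
  refine ⟨x i / p i, fun j ↦ ?_, fun b hb ↦ (le_div_iff₀ (coord_pos hi)).2 (hb i)⟩
  by_cases hj : j ∈ p.support
  · exact (le_div_iff₀ (coord_pos hj)).1 (hmin j hj)
  · simpa [notMem_support_iff.1 hj] using hx j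

lemma mem_convexHull_insert_single_iff_of_isGreatest (hp : p ∈ finsuppSimplex 𝕜 ι)
    (hx : x ∈ finsuppSimplex 𝕜 ι) (ha : IsGreatest {a : 𝕜 | a • p ≤ x} a) :
    x ∈ convexHull 𝕜 (insert p ((single · 1) '' s)) ↔ ∀ j ∉ s, x j = a * p j := by
  rw [mem_convexHull_insert_single_iff hp.2]
  constructor
  · rintro ⟨-, b, -, hbx, hxs⟩ j hj
    refine le_antisymm ?_ (ha.1 j)
    calc x j = b * p j := hxs j hj
      _ ≤ a * p j := mul_le_mul_of_nonneg_right (ha.2 hbx) (hp.1 j)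
  · have a_nonneg : 0 ≤ a := ha.2 (by simpa using hx.1)
    exact fun hxs ↦ ⟨hx.2, a, a_nonneg, ha.1, hxs⟩

lemma iInter_convexHull_insert_single [Nonempty κ] (hp : p ∈ finsuppSimplex 𝕜 ι)
    (S : κ → Set ι) :
    ⋂ k, convexHull 𝕜 (insert p ((single · 1) '' S k)) =
      convexHull 𝕜 (insert p ((single · 1) '' ⋂ k, S k)) := by
  refine Subset.antisymm (fun x hx ↦ ?_) (subset_iInter fun k ↦ convexHull_mono ?_)
  · rw [mem_iInter] at hx
    have hxΔ : x ∈ finsuppSimplex 𝕜 ι :=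
      convexHull_insert_single_subset_finsuppSimplex hp (hx (Classical.arbitrary κ))
    obtain ⟨a, ha⟩ := exists_isGreatest_smul_le (pos_of_mem_finsuppSimplex hp) hxΔ.1
    simp only [mem_convexHull_insert_single_iff_of_isGreatest hp hxΔ ha] at hx ⊢
    intro j hj
    obtain ⟨k, hjk⟩ := not_forall.1 (mt mem_iInter.2 hj)
    exact hx k j hjk
  · exact insert_subset_insert (image_mono (iInter_subset S k))

end Coordinates

section Simplex

variable {𝕜 ι κ E : Type*} [Field 𝕜] [AddCommGroup E] [Module 𝕜 E] {v : ι → E}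

lemma injOn_linearCombination_setOf_degree_eq_one (hv : AffineIndependent 𝕜 v) :
    InjOn (linearCombination 𝕜 v) {x | x.degree = 1} := by
  intro x hx y hy hxy
  have degree_sub : (x - y).degree = 0 := by rw [map_sub, hx, hy, sub_self]
  have combination_sub : linearCombination 𝕜 v (x - y) = 0 := by rw [map_sub, hxy, sub_self]
  refine sub_eq_zero.1 (support_eq_empty.1 (Finset.eq_empty_of_forall_notMem fun j hj ↦ ?_))
  exact mem_support_iff.1 hj (hv.eq_zero_of_sum_eq_zero degree_sub combination_sub j hj)

variable [LinearOrder 𝕜] {c : E}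

lemma image_linearCombination_convexHull_insert_single (p : ι →₀ 𝕜) (s : Set ι) :
    linearCombination 𝕜 v '' convexHull 𝕜 (insert p ((single · 1) '' s)) =
      convexHull 𝕜 (insert (linearCombination 𝕜 v p) (v '' s)) := by
  rw [LinearMap.image_convexHull, image_insert_eq, image_image]
  simp only [linearCombination_single, one_smul]

variable [IsStrictOrderedRing 𝕜]

lemma exists_mem_finsuppSimplex_linearCombination_eq (hc : c ∈ convexHull 𝕜 (range v)) :
    ∃ p ∈ finsuppSimplex 𝕜 ι, linearCombination 𝕜 v p = c := by
  refine convexHull_min ?_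
    ((convex_finsuppSimplex (𝕜 := 𝕜) (ι := ι)).linear_image (linearCombination 𝕜 v)) hc
  rintro _ ⟨i, rfl⟩
  exact ⟨single i 1, single_one_mem_finsuppSimplex i, by simp⟩

lemma iInter_convexHull_insert_image [Nonempty κ] (hv : AffineIndependent 𝕜 v)
    (hc : c ∈ convexHull 𝕜 (range v)) (S : κ → Set ι) :
    ⋂ k, convexHull 𝕜 (insert c (v '' S k)) = convexHull 𝕜 (insert c (v '' ⋂ k, S k)) := by
  obtain ⟨p, hp, rfl⟩ := exists_mem_finsuppSimplex_linearCombination_eq hc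
  have injOn_cones : InjOn (linearCombination 𝕜 v)
      (⋃ k, convexHull 𝕜 (insert p ((single · 1) '' S k))) :=
    (injOn_linearCombination_setOf_degree_eq_one hv).mono <| iUnion_subset fun _ _ hx ↦
      (convexHull_insert_single_subset_finsuppSimplex hp hx).2
  simp only [← image_linearCombination_convexHull_insert_single]
  rw [← injOn_cones.image_iInter_eq, iInter_convexHull_insert_single hp]

lemma inv_card_smul_sum_mem_convexHull_range [Fintype ι] [Nonempty ι] (v : ι → E) :
    (Fintype.card ι : 𝕜)⁻¹ • ∑ j, v j ∈ convexHull 𝕜 (range v) :=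
  mem_convexHull_of_exists_fintype (fun _ ↦ (Fintype.card ι : 𝕜)⁻¹) v (fun _ ↦ by positivity)
    (by simp) mem_range_self Finset.smul_sum.symm

theorem iInter_cones_eq_cone_over_face_general (hv : AffineIndependent 𝕜 v)
    (hc : c ∈ convexHull 𝕜 (range v)) :
    (∀ I : Set ι, I.Nonempty →
      (⋂ i ∈ I, convexHull 𝕜 (insert c (v '' {j | j ≠ i}))) =
        convexHull 𝕜 (insert c (v '' {j | j ∉ I}))) ∧
    (⋂ i, convexHull 𝕜 (insert c (v '' {j | j ≠ i}))) = {c} := by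
  have cones (I : Set ι) (hI : I.Nonempty) :
      (⋂ i ∈ I, convexHull 𝕜 (insert c (v '' {j | j ≠ i}))) =
        convexHull 𝕜 (insert c (v '' {j | j ∉ I})) := by
    have := hI.to_subtype
    have iInter_faces : ⋂ i : I, {j | j ≠ i.1} = {j | j ∉ I} := by aesop
    rw [biInter_eq_iInter, iInter_convexHull_insert_image hv hc, iInter_faces]
  have : Nonempty ι := range_nonempty_iff_nonempty.1 (convexHull_nonempty_iff.1 ⟨c, hc⟩)
  exact ⟨cones, by simpa using cones univ univ_nonempty⟩

end Simplex

/-- Intersection pattern of the cones from the barycenter of a simplex over its facets: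
for every nonempty index set `I`, the intersection of the cones `C i`, `i ∈ I`, is the
cone from the barycenter over the face spanned by the vertices not in `I`; in particular
the intersection of all the cones is the single point `{c}`. -/
theorem iInter_cones_eq_cone_over_face {E : Type*} [AddCommGroup E] [Module ℝ E] {n : ℕ}
    (v : Fin (n + 1) → E) (hv : AffineIndependent ℝ v)
    (c : E) (hc : c = ((n : ℝ) + 1)⁻¹ • ∑ j, v j) :
    (∀ I : Finset (Fin (n + 1)), I.Nonempty →
      (⋂ i ∈ I, convexHull ℝ (insert c (v '' {j | j ≠ i}))) =
        convexHull ℝ (insert c (v '' {j | j ∉ I}))) ∧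
    (⋂ i, convexHull ℝ (insert c (v '' {j | j ≠ i}))) = {c} := by
  have centroid_mem : c ∈ convexHull ℝ (range v) := by
    simpa [hc] using inv_card_smul_sum_mem_convexHull_range (𝕜 := ℝ) v
  exact (iInter_cones_eq_cone_over_face_general hv centroid_mem).imp_left fun h I hI ↦ h I hI
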